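/- arXiv:2306.01909 — 2 statements merged into one kernel-verified Lean document; each statement's English description precedes it below -/
import Mathlib

section
/- Let X be a nonempty compact Hausdorff topological space and A a unital C*-algebra over ℂ, and let C(X, A) denote the unital C*-algebra of continuous functions from X to A with pointwise operations and supremum norm. Let ω be any state on C(X, A). Then for all continuous real-valued functions g, g' on X with sup-norm at most 1 and all self-adjoint elements B, B' ∈ A with ‖B‖ ≤ 1 and ‖B'‖ ≤ 1, one has |ω(fun x ↦ g(x) • (B - B'))| + |ω(fun x ↦ g'(x) • (B + B'))| ≤ 2. -/
/-- A state on a unital complex C*-algebra (or more generally a unital complex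
star algebra): a `ℂ`-linear functional sending `1` to `1` and taking
nonnegative real values on elements of the form `star a * a`. -/
def IsState {A : Type*} [Ring A] [StarRing A] [Algebra ℂ A]
    (φ : A →ₗ[ℂ] ℂ) : Prop :=
  φ 1 = 1 ∧ ∀ a : A, 0 ≤ (φ (star a * a)).re ∧ (φ (star a * a)).im = 0

/-! On self-adjoint elements a state `φ` is real and bounded by the norm. Since
`|x| + |y| = max |x + y| |x - y|` for real `x`, `y`, the Bell inequality for `φ` reduces to the norm
bound `‖g • (b - b') ± g' • (b + b')‖ ≤ 2` in `C(X, A)`. Because the factor `C(X)` is commutative,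
its observables take real values `r`, `s` in `[-1, 1]` at each point of `X`, so regrouping as
`(s + r) • b + (s - r) • b'` bounds the norm by `|s + r| + |s - r| = 2 * max |s| |r| ≤ 2`. -/

theorem abs_add_abs_eq_max_abs_add_abs_sub {α : Type*} [AddCommGroup α] [LinearOrder α]
    [IsOrderedAddMonoid α] (x y : α) : |x| + |y| = max |x + y| |x - y| := by
  refine le_antisymm ?_ (max_le (abs_add_le x y) (abs_sub x y))
  rcases abs_choice x with hx | hx <;> rcases abs_choice y with hy | hy <;> rw [hx, hy, le_max_iff]
  · exact .inl (le_abs_self _)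
  · exact .inr ((sub_eq_add_neg x y).symm.trans_le (le_abs_self _))
  · exact .inr ((by abel : -x + y = -(x - y)).trans_le (neg_le_abs _))
  · exact .inl ((neg_add x y).symm.trans_le (neg_le_abs _))

namespace IsState

section StarAlgebra

variable {A : Type*} [Ring A] [StarRing A] [Algebra ℂ A] {φ : A →ₗ[ℂ] ℂ}

theorem map_algebraMap (hφ : IsState φ) (z : ℂ) : φ (algebraMap ℂ A z) = z := by
  rw [Algebra.algebraMap_eq_smul_one, map_smul, hφ.1, smul_eq_mul, mul_one]

theorem map_isSelfAdjoint (hφ : IsState φ) {a : A} (ha : IsSelfAdjoint a) :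
    IsSelfAdjoint (φ a) := by
  have polarization : (4 : ℂ) • a = star (1 + a) * (1 + a) - star (1 - a) * (1 - a) := by
    rw [star_add, star_sub, star_one, ha.star_eq, ofNat_smul_eq_nsmul]
    noncomm_ring
  have him : (4 * φ a).im = 0 := by
    rw [← smul_eq_mul, ← map_smul, polarization, map_sub, Complex.sub_im, (hφ.2 _).2, (hφ.2 _).2,
      sub_zero]
  exact Complex.conj_eq_iff_im.mpr (by simpa using him)

open scoped ComplexOrder in
theorem map_nonneg [PartialOrder A] [StarOrderedRing A] (hφ : IsState φ) {a : A} (ha : 0 ≤ a) :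
    0 ≤ φ a := by
  rw [StarOrderedRing.nonneg_iff] at ha
  induction ha using AddSubmonoid.closure_induction with
  | mem _ h =>
    obtain ⟨b, rfl⟩ := h
    exact Complex.nonneg_iff.mpr ⟨(hφ.2 b).1, (hφ.2 b).2.symm⟩
  | zero => rw [map_zero]
  | add _ _ _ _ hx hy => rw [map_add]; exact add_nonneg hx hy

end StarAlgebra

section CStarAlgebra

variable {A : Type*} [CStarAlgebra A] {φ : A →ₗ[ℂ] ℂ}

theorem re_apply_le_norm (hφ : IsState φ) {a : A} (ha : IsSelfAdjoint a) : (φ a).re ≤ ‖a‖ := by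
  let _ : PartialOrder A := CStarAlgebra.spectralOrder A
  have _ : StarOrderedRing A := CStarAlgebra.spectralOrderedRing A
  have hpos := hφ.map_nonneg (sub_nonneg.mpr ha.le_algebraMap_norm_self)
  rw [map_sub, IsScalarTower.algebraMap_apply ℝ ℂ A, hφ.map_algebraMap] at hpos
  exact sub_nonneg.mp (Complex.nonneg_iff.mp hpos).1

theorem norm_apply_le_norm (hφ : IsState φ) {a : A} (ha : IsSelfAdjoint a) : ‖φ a‖ ≤ ‖a‖ := by
  rw [← Complex.abs_re_eq_norm.mpr (Complex.conj_eq_iff_im.mp (hφ.map_isSelfAdjoint ha)), abs_le']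
  refine ⟨hφ.re_apply_le_norm ha, ?_⟩
  simpa only [map_neg, Complex.neg_re, norm_neg] using hφ.re_apply_le_norm ha.neg

theorem norm_apply_add_norm_apply_le (hφ : IsState φ) {a b : A} (ha : IsSelfAdjoint a)
    (hb : IsSelfAdjoint b) : ‖φ a‖ + ‖φ b‖ ≤ max ‖a + b‖ ‖a - b‖ := by
  obtain ⟨x, hx⟩ := Complex.conj_eq_iff_real.mp (hφ.map_isSelfAdjoint ha)
  obtain ⟨y, hy⟩ := Complex.conj_eq_iff_real.mp (hφ.map_isSelfAdjoint hb)
  calc ‖φ a‖ + ‖φ b‖ = |x| + |y| := by simp only [hx, hy, Complex.norm_real, Real.norm_eq_abs]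
    _ = max |x + y| |x - y| := abs_add_abs_eq_max_abs_add_abs_sub x y
    _ = max ‖φ (a + b)‖ ‖φ (a - b)‖ := by
      simp only [map_add, map_sub, hx, hy, ← Complex.ofReal_add, ← Complex.ofReal_sub,
        Complex.norm_real, Real.norm_eq_abs]
    _ ≤ max ‖a + b‖ ‖a - b‖ :=
      max_le_max (hφ.norm_apply_le_norm (ha.add hb)) (hφ.norm_apply_le_norm (ha.sub hb))

end CStarAlgebra

end IsState

theorem norm_smul_sub_add_smul_add_le_two {E : Type*} [SeminormedAddCommGroup E] [NormedSpace ℝ E]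
    {r s : ℝ} (hr : |r| ≤ 1) (hs : |s| ≤ 1) {a b : E} (ha : ‖a‖ ≤ 1) (hb : ‖b‖ ≤ 1) :
    ‖r • (a - b) + s • (a + b)‖ ≤ 2 :=
  calc ‖r • (a - b) + s • (a + b)‖ = ‖(s + r) • a + (s - r) • b‖ := by congr 1; module
    _ ≤ |s + r| * ‖a‖ + |s - r| * ‖b‖ :=
      norm_add_le_of_le (norm_smul_le _ _) (norm_smul_le _ _)
    _ ≤ |s + r| * 1 + |s - r| * 1 := by gcongr
    _ = max |2 * s| |2 * r| := by
      rw [mul_one, mul_one, abs_add_abs_eq_max_abs_add_abs_sub]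
      ring_nf
    _ ≤ 2 := by
      rw [abs_mul, abs_mul, abs_two]
      exact max_le (by linarith) (by linarith)

section ContinuousMap

variable {X : Type*} [TopologicalSpace X]

theorem isSelfAdjoint_continuousMap_smul {A : Type*} [AddCommGroup A] [StarAddMonoid A]
    [Module ℝ A] [StarModule ℝ A] [TopologicalSpace A] [ContinuousStar A] [ContinuousSMul ℝ A]
    (g : C(X, ℝ)) {b : C(X, A)} (hb : IsSelfAdjoint b) : IsSelfAdjoint (g • b) := by
  ext x
  exact (IsSelfAdjoint.all (g x)).smul (DFunLike.congr_fun hb x)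

variable [CompactSpace X]

theorem norm_continuousMap_smul_sub_add_smul_add_le_two {E : Type*} [SeminormedAddCommGroup E]
    [NormedSpace ℝ E] {g g' : C(X, ℝ)} (hg : ‖g‖ ≤ 1) (hg' : ‖g'‖ ≤ 1) {b b' : C(X, E)}
    (hb : ‖b‖ ≤ 1) (hb' : ‖b'‖ ≤ 1) : ‖g • (b - b') + g' • (b + b')‖ ≤ 2 :=
  (ContinuousMap.norm_le _ zero_le_two).mpr fun x =>
    norm_smul_sub_add_smul_add_le_two ((g.norm_coe_le_norm x).trans hg)
      ((g'.norm_coe_le_norm x).trans hg') ((b.norm_coe_le_norm x).trans hb)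
      ((b'.norm_coe_le_norm x).trans hb')

theorem state_of_continuousMap_satisfies_bell_inequalities_general {A : Type*} [CStarAlgebra A]
    {ω : C(X, A) →ₗ[ℂ] ℂ} (hω : IsState ω) {g g' : C(X, ℝ)} (hg : ‖g‖ ≤ 1) (hg' : ‖g'‖ ≤ 1)
    {b b' : C(X, A)} (hb : IsSelfAdjoint b) (hb' : IsSelfAdjoint b') (hbn : ‖b‖ ≤ 1)
    (hb'n : ‖b'‖ ≤ 1) : ‖ω (g • (b - b'))‖ + ‖ω (g' • (b + b'))‖ ≤ 2 := by
  refine (hω.norm_apply_add_norm_apply_le (isSelfAdjoint_continuousMap_smul g (hb.sub hb'))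
    (isSelfAdjoint_continuousMap_smul g' (hb.add hb'))).trans (max_le ?_ ?_)
  · exact norm_continuousMap_smul_sub_add_smul_add_le_two hg hg' hbn hb'n
  · rw [sub_eq_add_neg (g • _), ← neg_smul]
    exact norm_continuousMap_smul_sub_add_smul_add_le_two hg ((norm_neg g').trans_le hg') hbn hb'n

end ContinuousMap

/-- Baez's theorem for a composite system with one commutative factor,
formulated concretely on `C(X, A) ≅ C(X) ⊗ A`: every state satisfies the Bell
inequalities, where the elementary tensor `g ⊗ B` corresponds to the function
`x ↦ g x • B`. -/
theorem state_of_continuousMap_satisfies_bell_inequalities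
    (X : Type*) [TopologicalSpace X] [CompactSpace X] [T2Space X] [Nonempty X]
    (A : Type*) [CStarAlgebra A]
    (ω : C(X, A) →ₗ[ℂ] ℂ) (hω : IsState ω)
    (g g' : C(X, ℝ)) (hg : ‖g‖ ≤ 1) (hg' : ‖g'‖ ≤ 1)
    (B B' : A) (hB : IsSelfAdjoint B) (hB' : IsSelfAdjoint B')
    (hBn : ‖B‖ ≤ 1) (hB'n : ‖B'‖ ≤ 1) :
    ‖ω ⟨fun x => g x • (B - B'), g.continuous.smul continuous_const⟩‖ +
      ‖ω ⟨fun x => g' x • (B + B'), g'.continuous.smul continuous_const⟩‖ ≤ 2 :=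
  state_of_continuousMap_satisfies_bell_inequalities_general hω hg hg'
    (b := .const X B) (b' := .const X B') (ContinuousMap.ext fun _ => hB)
    (ContinuousMap.ext fun _ => hB')
    ((ContinuousMap.norm_le _ zero_le_one).mpr fun _ => hBn)
    ((ContinuousMap.norm_le _ zero_le_one).mpr fun _ => hB'n)
end

section
/- Let n, m be positive natural numbers and let ρ ∈ M_{nm}(ℂ) (indexed by Fin n × Fin m) be a separable density matrix, i.e. ρ = ∑_{k ∈ Finset} t_k • (ρ_k ⊗ₖ σ_k) where each t_k ≥ 0 with ∑ t_k = 1, each ρ_k ∈ M_n(ℂ) is positive semidefinite with trace 1, and each σ_k ∈ M_m(ℂ) is positive semidefinite with trace 1, and ⊗ₖ denotes the Kronecker product. Then for all self-adjoint matrices A, A' ∈ M_n(ℂ) and B, B' ∈ M_m(ℂ), each of operator (spectral) norm at most 1, one has |trace(ρ * (A ⊗ₖ (B - B')))| + |trace(ρ * (A' ⊗ₖ (B + B')))| ≤ 2. -/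
open scoped Matrix.Norms.L2Operator Kronecker ComplexOrder
open Matrix

/-!
Both correlation terms are convex in the state, so it suffices to treat a product state `P ⊗ₖ Q`,
where they factor. There the expectations of `A` and `A'` have modulus at most `1`, as one sees by
diagonalizing `P`, while those of `B` and `B'` are reals `b`, `b'` in `[-1, 1]`, and
`|b - b'| + |b + b'| = 2 max (|b|, |b'|)`.
-/

section Trace

variable {𝕜 m n : Type*} [RCLike 𝕜] [Fintype m] [Fintype n]

theorem norm_apply_le_l2_opNorm [DecidableEq n] (A : Matrix m n 𝕜) (i : m) (j : n) :
    ‖A i j‖ ≤ ‖A‖ := by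
  let e : EuclideanSpace 𝕜 n := EuclideanSpace.single j 1
  calc ‖A i j‖ = ‖(WithLp.toLp 2 (A *ᵥ e) : EuclideanSpace 𝕜 m) i‖ := by simp [e]
    _ ≤ ‖(WithLp.toLp 2 (A *ᵥ e) : EuclideanSpace 𝕜 m)‖ := PiLp.norm_apply_le _ i
    _ ≤ ‖A‖ * ‖e‖ := l2_opNorm_mulVec A e
    _ = ‖A‖ := by simp [e]

theorem norm_trace_diagonal_mul_le [DecidableEq n] (d : n → 𝕜) (A : Matrix n n 𝕜) :
    ‖(diagonal d * A).trace‖ ≤ (∑ i, ‖d i‖) * ‖A‖ := by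
  simp only [trace, diag_apply, diagonal_mul, Finset.sum_mul]
  refine norm_sum_le_of_le _ fun i _ => ?_
  rw [norm_mul]
  gcongr
  exact norm_apply_le_l2_opNorm A i i

theorem norm_trace_mul_le_of_posSemidef [DecidableEq n] {P : Matrix n n 𝕜} (hP : P.PosSemidef)
    (A : Matrix n n 𝕜) : ‖(P * A).trace‖ ≤ RCLike.re P.trace * ‖A‖ := by
  let U := hP.1.eigenvectorUnitary
  let D : Matrix n n 𝕜 := diagonal fun i => (hP.1.eigenvalues i : 𝕜)
  have hPU : P = U * D * star (U : Matrix n n 𝕜) := hP.1.spectral_theorem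
  calc ‖(P * A).trace‖ = ‖(D * (star (U : Matrix n n 𝕜) * A * U)).trace‖ := by
        rw [hPU, Matrix.mul_assoc, Matrix.mul_assoc, trace_mul_comm]
        simp only [Matrix.mul_assoc]
    _ ≤ (∑ i, ‖(hP.1.eigenvalues i : 𝕜)‖) * ‖star (U : Matrix n n 𝕜) * A * U‖ :=
        norm_trace_diagonal_mul_le _ _
    _ = RCLike.re P.trace * ‖A‖ := by
        rw [CStarRing.norm_mul_coe_unitary, ← Unitary.coe_star, CStarRing.norm_coe_unitary_mul,
          hP.1.trace_eq_sum_eigenvalues, ← RCLike.ofReal_sum, RCLike.ofReal_re]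
        simp only [RCLike.norm_of_nonneg (hP.eigenvalues_nonneg _)]

theorem isSelfAdjoint_trace_mul {R : Type*} [CommSemiring R] [StarRing R] {A B : Matrix n n R}
    (hA : A.IsHermitian) (hB : B.IsHermitian) : IsSelfAdjoint (A * B).trace := by
  rw [isSelfAdjoint_iff, ← trace_conjTranspose, conjTranspose_mul, hA.eq, hB.eq, trace_mul_comm]

theorem trace_kronecker_mul_kronecker {R : Type*} [CommSemiring R] (P X : Matrix m m R)
    (Q Y : Matrix n n R) :
    ((P ⊗ₖ Q) * (X ⊗ₖ Y)).trace = (P * X).trace * (Q * Y).trace := by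
  rw [← mul_kronecker_mul, trace_kronecker]

theorem convexOn_norm_trace_mul (X : Matrix n n 𝕜) :
    ConvexOn ℝ Set.univ fun P : Matrix n n 𝕜 => ‖(P * X).trace‖ :=
  convexOn_univ_norm.comp_linearMap (traceLinearMap n ℝ 𝕜 ∘ₗ LinearMap.mulRight ℝ X)

end Trace

theorem abs_sub_add_abs_add {R : Type*} [CommRing R] [LinearOrder R] [IsStrictOrderedRing R]
    (a b : R) : |a - b| + |a + b| = 2 * max |a| |b| := by
  grind

theorem norm_sub_add_norm_add_of_isSelfAdjoint {𝕜 : Type*} [RCLike 𝕜] {z w : 𝕜}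
    (hz : IsSelfAdjoint z) (hw : IsSelfAdjoint w) :
    ‖z - w‖ + ‖z + w‖ = 2 * max ‖z‖ ‖w‖ := by
  obtain ⟨a, rfl⟩ := RCLike.conj_eq_iff_real.mp hz
  obtain ⟨b, rfl⟩ := RCLike.conj_eq_iff_real.mp hw
  simp only [← RCLike.ofReal_sub, ← RCLike.ofReal_add, RCLike.norm_ofReal, abs_sub_add_abs_add]

section Separable

/-- The density matrices (states) of the quantum system with state space `𝕜ⁿ`, encoded as a set so
that convex hulls can be taken. -/
def densityMatrices (𝕜 n : Type*) [RCLike 𝕜] [Fintype n] : Set (Matrix n n 𝕜) :=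
  {P | P.PosSemidef ∧ P.trace = 1}

/-- The separable (unentangled) states of a bipartite system, encoded as the convex hull of the
product states `P ⊗ₖ Q`. -/
def separableDensityMatrices (𝕜 m n : Type*) [RCLike 𝕜] [Fintype m] [Fintype n] :
    Set (Matrix (m × n) (m × n) 𝕜) :=
  convexHull ℝ (Set.image2 (· ⊗ₖ ·) (densityMatrices 𝕜 m) (densityMatrices 𝕜 n))

variable {𝕜 m n : Type*} [RCLike 𝕜] [Fintype m] [Fintype n]

theorem sum_smul_kronecker_mem_separableDensityMatrices {ι : Type*} {s : Finset ι} {t : ι → ℝ}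
    {P : ι → Matrix m m 𝕜} {Q : ι → Matrix n n 𝕜} (ht : ∀ k ∈ s, 0 ≤ t k)
    (hts : ∑ k ∈ s, t k = 1) (hP : ∀ k ∈ s, P k ∈ densityMatrices 𝕜 m)
    (hQ : ∀ k ∈ s, Q k ∈ densityMatrices 𝕜 n) :
    ∑ k ∈ s, t k • (P k ⊗ₖ Q k) ∈ separableDensityMatrices 𝕜 m n :=
  (convex_convexHull ℝ _).sum_mem ht hts fun k hk =>
    subset_convexHull ℝ _ (Set.mem_image2_of_mem (hP k hk) (hQ k hk))

variable [DecidableEq m] [DecidableEq n]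

theorem norm_trace_mul_le_of_mem_densityMatrices {P : Matrix n n 𝕜}
    (hP : P ∈ densityMatrices 𝕜 n) (A : Matrix n n 𝕜) : ‖(P * A).trace‖ ≤ ‖A‖ := by
  simpa [hP.2] using norm_trace_mul_le_of_posSemidef hP.1 A

theorem bell_inequality_of_product_state {P : Matrix m m 𝕜} {Q : Matrix n n 𝕜}
    (hP : P ∈ densityMatrices 𝕜 m) (hQ : Q ∈ densityMatrices 𝕜 n)
    {A A' : Matrix m m 𝕜} {B B' : Matrix n n 𝕜} (hB : B.IsHermitian) (hB' : B'.IsHermitian)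
    (hAn : ‖A‖ ≤ 1) (hA'n : ‖A'‖ ≤ 1) (hBn : ‖B‖ ≤ 1) (hB'n : ‖B'‖ ≤ 1) :
    ‖((P ⊗ₖ Q) * (A ⊗ₖ (B - B'))).trace‖ + ‖((P ⊗ₖ Q) * (A' ⊗ₖ (B + B'))).trace‖ ≤ 2 := by
  have ha := (norm_trace_mul_le_of_mem_densityMatrices hP A).trans hAn
  have ha' := (norm_trace_mul_le_of_mem_densityMatrices hP A').trans hA'n
  have hb := (norm_trace_mul_le_of_mem_densityMatrices hQ B).trans hBn
  have hb' := (norm_trace_mul_le_of_mem_densityMatrices hQ B').trans hB'n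
  rw [trace_kronecker_mul_kronecker, trace_kronecker_mul_kronecker, Matrix.mul_sub,
    Matrix.mul_add, trace_sub, trace_add, norm_mul, norm_mul]
  calc _ ≤ ‖(Q * B).trace - (Q * B').trace‖ + ‖(Q * B).trace + (Q * B').trace‖ :=
        add_le_add (mul_le_of_le_one_left (norm_nonneg _) ha)
          (mul_le_of_le_one_left (norm_nonneg _) ha')
    _ = 2 * max ‖(Q * B).trace‖ ‖(Q * B').trace‖ :=
        norm_sub_add_norm_add_of_isSelfAdjoint (isSelfAdjoint_trace_mul hQ.1.1 hB)
          (isSelfAdjoint_trace_mul hQ.1.1 hB')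
    _ ≤ 2 := mul_le_of_le_one_right zero_le_two (max_le hb hb')

theorem separable_density_matrix_satisfies_bell_inequalities_general
    {ρ : Matrix (m × n) (m × n) 𝕜} (hρ : ρ ∈ separableDensityMatrices 𝕜 m n)
    {A A' : Matrix m m 𝕜} {B B' : Matrix n n 𝕜} (hB : B.IsHermitian) (hB' : B'.IsHermitian)
    (hAn : ‖A‖ ≤ 1) (hA'n : ‖A'‖ ≤ 1) (hBn : ‖B‖ ≤ 1) (hB'n : ‖B'‖ ≤ 1) :
    ‖(ρ * (A ⊗ₖ (B - B'))).trace‖ + ‖(ρ * (A' ⊗ₖ (B + B'))).trace‖ ≤ 2 := by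
  have hconvex := ((convexOn_norm_trace_mul (A ⊗ₖ (B - B'))).add
    (convexOn_norm_trace_mul (A' ⊗ₖ (B + B')))).convex_le 2
  refine (convexHull_min ?_ hconvex hρ).2
  rintro _ ⟨P, hP, Q, hQ, rfl⟩
  exact ⟨Set.mem_univ _, bell_inequality_of_product_state hP hQ hB hB' hAn hA'n hBn hB'n⟩

end Separable

/-- Every separable density matrix (a convex combination of Kronecker products
of density matrices) satisfies the Bell inequalities. -/
theorem separable_density_matrix_satisfies_bell_inequalities
    (n m : ℕ) (hn : 0 < n) (hm : 0 < m)
    (ρ : Matrix (Fin n × Fin m) (Fin n × Fin m) ℂ)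
    (ι : Type*) (s : Finset ι) (t : ι → ℝ)
    (ρs : ι → Matrix (Fin n) (Fin n) ℂ) (σs : ι → Matrix (Fin m) (Fin m) ℂ)
    (ht : ∀ k ∈ s, 0 ≤ t k) (hts : ∑ k ∈ s, t k = 1)
    (hρs : ∀ k ∈ s, (ρs k).PosSemidef) (hρstr : ∀ k ∈ s, (ρs k).trace = 1)
    (hσs : ∀ k ∈ s, (σs k).PosSemidef) (hσstr : ∀ k ∈ s, (σs k).trace = 1)
    (hρ : ρ = ∑ k ∈ s, (t k : ℂ) • (ρs k ⊗ₖ σs k))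
    (A A' : Matrix (Fin n) (Fin n) ℂ) (B B' : Matrix (Fin m) (Fin m) ℂ)
    (hA : A.IsHermitian) (hA' : A'.IsHermitian)
    (hB : B.IsHermitian) (hB' : B'.IsHermitian)
    (hAn : ‖A‖ ≤ 1) (hA'n : ‖A'‖ ≤ 1) (hBn : ‖B‖ ≤ 1) (hB'n : ‖B'‖ ≤ 1) :
    ‖(ρ * (A ⊗ₖ (B - B'))).trace‖ +
        ‖(ρ * (A' ⊗ₖ (B + B'))).trace‖ ≤ 2 := by
  have hsep := sum_smul_kronecker_mem_separableDensityMatrices ht hts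
    (fun k hk => ⟨hρs k hk, hρstr k hk⟩) (fun k hk => ⟨hσs k hk, hσstr k hk⟩)
  exact separable_density_matrix_satisfies_bell_inequalities_general
    (by simpa only [hρ, Complex.coe_smul] using hsep) hB hB' hAn hA'n hBn hB'n
end
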